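/- arXiv:2402.11524 — 2 statements merged into one kernel-verified Lean document; each statement's English description precedes it below -/
import Mathlib

section
/- Let s < T, let X₁,…,X_m : ℝ^d → ℝ^d be C^∞ vector fields with vanishing Euclidean divergence, and let β : [s,T]×ℝ^d → ℝ^m be continuous, continuously differentiable in the space variable, with sup_{[s,T]×ℝ^d} |β| < ∞. Suppose ρ : [s,T]×ℝ^d → ℝ is continuous, continuously differentiable in t and twice continuously differentiable in y on (s,T]×ℝ^d, there is a compact set K ⊂ ℝ^d such that ρ(t,·) is supported in K for every t ∈ [s,T], ρ solves the Fokker–Planck equation ∂_tρ(t,y) = Δ_Gρ(t,·)(y) + div_G(β(t,·)ρ(t,·))(y) for all (t,y) ∈ (s,T]×ℝ^d, and ρ(s,·) ≡ 0. Then ρ(t,y) = 0 for all (t,y) ∈ [s,T]×ℝ^d. -/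
open MeasureTheory Set

/-- Directional derivative of `f` along the vector field `V` at `x`. -/
noncomputable def dirDeriv {d : ℕ} (V : (Fin d → ℝ) → (Fin d → ℝ))
    (f : (Fin d → ℝ) → ℝ) (x : Fin d → ℝ) : ℝ :=
  fderiv ℝ f x (V x)

/-- Euclidean divergence of a vector field on `ℝ^d`. -/
noncomputable def divE {d : ℕ} (V : (Fin d → ℝ) → (Fin d → ℝ)) (x : Fin d → ℝ) : ℝ :=
  ∑ k, fderiv ℝ (fun y => V y k) x (Pi.single k 1)

/-- Horizontal Laplacian `Δ_G f = Σᵢ Xᵢ(Xᵢ f)`. -/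
noncomputable def deltaG {d m : ℕ} (X : Fin m → (Fin d → ℝ) → (Fin d → ℝ))
    (f : (Fin d → ℝ) → ℝ) (x : Fin d → ℝ) : ℝ :=
  ∑ i, dirDeriv (X i) (dirDeriv (X i) f) x

/-- Horizontal divergence `div_G v = Σᵢ Xᵢ vᵢ`. -/
noncomputable def divG {d m : ℕ} (X : Fin m → (Fin d → ℝ) → (Fin d → ℝ))
    (v : (Fin d → ℝ) → Fin m → ℝ) (x : Fin d → ℝ) : ℝ :=
  ∑ i, dirDeriv (X i) (fun y => v y i) x

/-- Euclidean norm on `ℝ^m`. -/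
noncomputable def euclNorm {m : ℕ} (v : Fin m → ℝ) : ℝ :=
  Real.sqrt (∑ i, v i ^ 2)

/-!
This is an energy estimate for `E t = ∫ ρ(t, y)² dy`. Put `aᵢ = Xᵢ ρ` and `cᵢ = div Xᵢ`. The
formal adjoint of `Xᵢ` is `-(Xᵢ + cᵢ)`, so the equation `∂ₜρ = ∑ᵢ Xᵢ(aᵢ + βᵢ ρ)` gives
`E' = -2 ∫ ∑ᵢ (aᵢ + cᵢ ρ)(aᵢ + βᵢ ρ) ≤ ½ ∫ ∑ᵢ (βᵢ - cᵢ)² ρ²`: completing the square absorbs the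
terms linear in `aᵢ` into the dissipation `aᵢ²`, so no bound on the derivatives of `β` enters. Only
the values of `β` and `cᵢ` on the common compact support of the `ρ(t, ·)` matter, and there
`∑ᵢ (βᵢ - cᵢ)²` is bounded. Grönwall's inequality then forces `E = 0`.
-/

section Calculus

variable {d : ℕ} {V : (Fin d → ℝ) → (Fin d → ℝ)} {f g : (Fin d → ℝ) → ℝ} {x : Fin d → ℝ}

lemma dirDeriv_eq_sum (V : (Fin d → ℝ) → (Fin d → ℝ)) (f : (Fin d → ℝ) → ℝ) (x : Fin d → ℝ) :
    dirDeriv V f x = ∑ k, V x k * fderiv ℝ f x (Pi.single k 1) := by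
  rw [dirDeriv]
  conv_lhs => rw [pi_eq_sum_univ' (V x)]
  simp only [map_sum, map_smul, smul_eq_mul]

lemma dirDeriv_add (V : (Fin d → ℝ) → (Fin d → ℝ)) (hf : DifferentiableAt ℝ f x)
    (hg : DifferentiableAt ℝ g x) :
    dirDeriv V (fun y => f y + g y) x = dirDeriv V f x + dirDeriv V g x := by
  simp only [dirDeriv, fderiv_fun_add hf hg, add_apply]

lemma dirDeriv_mul (V : (Fin d → ℝ) → (Fin d → ℝ)) (hf : DifferentiableAt ℝ f x)
    (hg : DifferentiableAt ℝ g x) :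
    dirDeriv V (fun y => f y * g y) x = f x * dirDeriv V g x + dirDeriv V f x * g x := by
  simp only [dirDeriv, fderiv_fun_mul hf hg, add_apply, smul_apply, smul_eq_mul,
    mul_comm (g x)]

lemma divE_smul (hf : DifferentiableAt ℝ f x) (hV : DifferentiableAt ℝ V x) :
    divE (fun y => f y • V y) x = dirDeriv V f x + f x * divE V x := by
  have hterm (k : Fin d) : fderiv ℝ (fun y => f y * V y k) x (Pi.single k 1) =
      V x k * fderiv ℝ f x (Pi.single k 1) +
        f x * fderiv ℝ (fun y => V y k) x (Pi.single k 1) := by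
    rw [fderiv_fun_mul hf (differentiableAt_pi.1 hV k), add_apply, smul_apply, smul_apply,
      smul_eq_mul, smul_eq_mul, add_comm]
  simp only [divE, Pi.smul_apply, smul_eq_mul, hterm, Finset.sum_add_distrib, dirDeriv_eq_sum,
    Finset.mul_sum]

lemma contDiff_dirDeriv {n k : WithTop ℕ∞} (hV : ContDiff ℝ n V) (hf : ContDiff ℝ k f)
    (hnk : n + 1 ≤ k) : ContDiff ℝ n (dirDeriv V f) :=
  (hf.fderiv_right hnk).clm_apply hV

lemma continuous_dirDeriv (hV : Continuous V) (hf : ContDiff ℝ 1 f) :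
    Continuous (dirDeriv V f) :=
  (hf.continuous_fderiv one_ne_zero).clm_apply hV

lemma continuous_divE (hV : ContDiff ℝ 1 V) : Continuous (divE V) :=
  continuous_finsetSum _ fun k _ =>
    ((contDiff_pi.1 hV k).continuous_fderiv one_ne_zero).clm_apply continuous_const

lemma hasCompactSupport_dirDeriv (V : (Fin d → ℝ) → (Fin d → ℝ)) (hf : HasCompactSupport f) :
    HasCompactSupport (dirDeriv V f) :=
  (hf.fderiv ℝ).mono fun x hx hx' => hx (by rw [dirDeriv, hx', zero_apply])

lemma hasCompactSupport_sq {Y : Type*} [TopologicalSpace Y] {u : Y → ℝ}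
    (hu : HasCompactSupport u) : HasCompactSupport (fun y => u y ^ 2) := by
  simp only [pow_two]
  exact hu.mul_left

end Calculus

section IntegrationByParts

variable {d : ℕ} {V : (Fin d → ℝ) → (Fin d → ℝ)} {f g : (Fin d → ℝ) → ℝ}

lemma integral_fderiv_apply_eq_zero {E : Type*} [NormedAddCommGroup E] [NormedSpace ℝ E]
    [FiniteDimensional ℝ E] [MeasurableSpace E] [BorelSpace E] (μ : Measure E) [μ.IsAddHaarMeasure]
    {f : E → ℝ} (hf : ContDiff ℝ 1 f) (hfc : HasCompactSupport f) (v : E) :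
    ∫ x, fderiv ℝ f x v ∂μ = 0 := by
  have hint : Integrable (fun x => fderiv ℝ f x v) μ :=
    ((hf.continuous_fderiv one_ne_zero).clm_apply continuous_const).integrable_of_hasCompactSupport
      (hfc.fderiv_apply ℝ v)
  simpa using integral_mul_fderiv_eq_neg_fderiv_mul_of_integrable (f := fun _ : E => (1 : ℝ))
    (by simp) (by simpa using hint)
    (by simpa using hf.continuous.integrable_of_hasCompactSupport hfc)
    (fun x _ => differentiableAt_const 1) (fun x _ => hf.differentiable one_ne_zero x)

lemma integral_divE_eq_zero (hV : ContDiff ℝ 1 V) (hVc : HasCompactSupport V) :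
    ∫ x, divE V x = 0 := by
  have hVk (k : Fin d) : ContDiff ℝ 1 (fun y => V y k) := contDiff_pi.1 hV k
  have hVkc (k : Fin d) : HasCompactSupport (fun y => V y k) :=
    hVc.comp_left (g := fun v : Fin d → ℝ => v k) rfl
  have hint (k : Fin d) :
      Integrable (fun x => fderiv ℝ (fun y => V y k) x (Pi.single k 1)) :=
    (((hVk k).continuous_fderiv one_ne_zero).clm_apply
      continuous_const).integrable_of_hasCompactSupport ((hVkc k).fderiv_apply ℝ _)
  calc ∫ x, divE V x
      = ∑ k, ∫ x, fderiv ℝ (fun y => V y k) x (Pi.single k 1) :=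
        integral_finsetSum _ fun k _ => hint k
    _ = 0 := Finset.sum_eq_zero fun k _ =>
        integral_fderiv_apply_eq_zero volume (hVk k) (hVkc k) _

lemma integrable_dirDeriv_add_divE_mul_mul (hV : ContDiff ℝ 1 V) (hf : ContDiff ℝ 1 f)
    (hfc : HasCompactSupport f) (hg : Continuous g) :
    Integrable (fun x => (dirDeriv V f x + divE V x * f x) * g x) :=
  (((continuous_dirDeriv hV.continuous hf).add
    ((continuous_divE hV).mul hf.continuous)).mul hg).integrable_of_hasCompactSupport
    ((hasCompactSupport_dirDeriv V hfc).add hfc.mul_left).mul_right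

lemma integral_mul_dirDeriv (hV : ContDiff ℝ 1 V) (hf : ContDiff ℝ 1 f)
    (hfc : HasCompactSupport f) (hg : ContDiff ℝ 1 g) :
    ∫ x, f x * dirDeriv V g x = -∫ x, (dirDeriv V f x + divE V x * f x) * g x := by
  have hleft : Integrable (fun x => f x * dirDeriv V g x) :=
    (hf.continuous.mul (continuous_dirDeriv hV.continuous hg)).integrable_of_hasCompactSupport
      hfc.mul_right
  have hright := integrable_dirDeriv_add_divE_mul_mul hV hf hfc hg.continuous
  have hdiv (x : Fin d → ℝ) : divE (fun y => (f y * g y) • V y) x =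
      f x * dirDeriv V g x + (dirDeriv V f x + divE V x * f x) * g x := by
    have hfx := hf.differentiable one_ne_zero x
    have hgx := hg.differentiable one_ne_zero x
    rw [divE_smul (hfx.fun_mul hgx) (hV.differentiable one_ne_zero x), dirDeriv_mul V hfx hgx]
    ring
  have hzero : ∫ x, divE (fun y => (f y * g y) • V y) x = 0 :=
    integral_divE_eq_zero ((hf.mul hg).smul hV) hfc.mul_right.smul_right
  rw [integral_congr_ae (.of_forall hdiv), integral_add hleft hright] at hzero
  exact eq_neg_of_add_eq_zero_left hzero

end IntegrationByParts

/-- The spatial operator `u ↦ Δ_G u + div_G (b u)` on the right-hand side of the Fokker–Planck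
equation, with the drift `b` frozen at one time. -/
noncomputable def fokkerPlanckOp {d m : ℕ} (X : Fin m → (Fin d → ℝ) → (Fin d → ℝ))
    (b : (Fin d → ℝ) → Fin m → ℝ) (u : (Fin d → ℝ) → ℝ) (x : Fin d → ℝ) : ℝ :=
  deltaG X u x + divG X (fun z i => b z i * u z) x

section EnergyEstimate

variable {d m : ℕ} {X : Fin m → (Fin d → ℝ) → (Fin d → ℝ)} {b : (Fin d → ℝ) → Fin m → ℝ}
  {u : (Fin d → ℝ) → ℝ}

lemma contDiff_dirDeriv_add_mul {V : (Fin d → ℝ) → (Fin d → ℝ)} {c : (Fin d → ℝ) → ℝ}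
    (hV : ContDiff ℝ 1 V) (hc : ContDiff ℝ 1 c) (hu : ContDiff ℝ 2 u) :
    ContDiff ℝ 1 (fun y => dirDeriv V u y + c y * u y) :=
  (contDiff_dirDeriv hV hu one_add_one_eq_two.le).add (hc.mul (hu.of_le one_le_two))

lemma fokkerPlanckOp_eq_sum (hX : ∀ i, ContDiff ℝ 1 (X i)) (hb : ContDiff ℝ 1 b)
    (hu : ContDiff ℝ 2 u) (x : Fin d → ℝ) :
    fokkerPlanckOp X b u x =
      ∑ i, dirDeriv (X i) (fun y => dirDeriv (X i) u y + b y i * u y) x := by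
  rw [fokkerPlanckOp, deltaG, divG, ← Finset.sum_add_distrib]
  refine Finset.sum_congr rfl fun i _ => (dirDeriv_add (X i) ?_ ?_).symm
  · exact (contDiff_dirDeriv (hX i) hu one_add_one_eq_two.le).differentiable one_ne_zero x
  · exact ((contDiff_pi.1 hb i).mul (hu.of_le one_le_two)).differentiable one_ne_zero x

lemma integral_mul_fokkerPlanckOp (hX : ∀ i, ContDiff ℝ 1 (X i)) (hb : ContDiff ℝ 1 b)
    (hu : ContDiff ℝ 2 u) (huc : HasCompactSupport u) :
    ∫ x, u x * fokkerPlanckOp X b u x =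
      -∫ x, ∑ i, (dirDeriv (X i) u x + divE (X i) x * u x) *
        (dirDeriv (X i) u x + b x i * u x) := by
  have hu1 : ContDiff ℝ 1 u := hu.of_le one_le_two
  have hflux (i : Fin m) : ContDiff ℝ 1 (fun y => dirDeriv (X i) u y + b y i * u y) :=
    contDiff_dirDeriv_add_mul (hX i) (contDiff_pi.1 hb i) hu
  have hint (i : Fin m) : Integrable
      (fun x => u x * dirDeriv (X i) (fun y => dirDeriv (X i) u y + b y i * u y) x) :=
    (hu.continuous.mul (continuous_dirDeriv (hX i).continuous
      (hflux i))).integrable_of_hasCompactSupport huc.mul_right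
  simp only [fokkerPlanckOp_eq_sum hX hb hu, Finset.mul_sum]
  rw [integral_finsetSum _ fun i _ => hint i, integral_finsetSum _ fun i _ =>
    integrable_dirDeriv_add_divE_mul_mul (hX i) hu1 huc (hflux i).continuous,
    ← Finset.sum_neg_distrib]
  exact Finset.sum_congr rfl fun i _ => integral_mul_dirDeriv (hX i) hu1 huc (hflux i)

lemma neg_add_mul_mul_add_mul_le (a b c u : ℝ) :
    -((a + c * u) * (a + b * u)) ≤ (b - c) ^ 2 / 4 * u ^ 2 := by
  linear_combination sq_nonneg (a + (b + c) / 2 * u)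

lemma integral_mul_fokkerPlanckOp_le (hX : ∀ i, ContDiff ℝ 1 (X i)) (hb : ContDiff ℝ 1 b)
    (hu : ContDiff ℝ 2 u) (huc : HasCompactSupport u) {C : ℝ}
    (hC : ∀ x ∈ Function.support u, ∑ i, (b x i - divE (X i) x) ^ 2 ≤ C) :
    ∫ x, u x * fokkerPlanckOp X b u x ≤ C / 4 * ∫ x, u x ^ 2 := by
  have husq : Integrable (fun x => u x ^ 2) :=
    (hu.continuous.pow 2).integrable_of_hasCompactSupport (hasCompactSupport_sq huc)
  rw [integral_mul_fokkerPlanckOp hX hb hu huc, ← integral_neg, ← integral_const_mul]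
  refine integral_mono (integrable_finsetSum _ fun i _ =>
    integrable_dirDeriv_add_divE_mul_mul (hX i) (hu.of_le one_le_two) huc
      (contDiff_dirDeriv_add_mul (hX i) (contDiff_pi.1 hb i) hu).continuous).neg
    (husq.const_mul _) fun x => ?_
  calc -∑ i, (dirDeriv (X i) u x + divE (X i) x * u x) * (dirDeriv (X i) u x + b x i * u x)
      ≤ ∑ i, (b x i - divE (X i) x) ^ 2 / 4 * u x ^ 2 := by
        rw [← Finset.sum_neg_distrib]
        exact Finset.sum_le_sum fun i _ => neg_add_mul_mul_add_mul_le _ _ _ _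
    _ = (∑ i, (b x i - divE (X i) x) ^ 2) / 4 * u x ^ 2 := by
        rw [← Finset.sum_mul, Finset.sum_div]
    _ ≤ C / 4 * u x ^ 2 := by
        by_cases hx : u x = 0
        · simp only [hx, ne_eq, two_ne_zero, not_false_eq_true, zero_pow, mul_zero, le_refl]
        · gcongr
          exact hC x hx

lemma sum_sq_le_sq_of_euclNorm_le {v : Fin m → ℝ} {M : ℝ} (hv : euclNorm v ≤ M) :
    ∑ i, v i ^ 2 ≤ M ^ 2 :=
  (Real.sqrt_le_iff.1 hv).2

lemma exists_sum_sub_divE_sq_le (hX : ∀ i, ContDiff ℝ 1 (X i)) {K : Set (Fin d → ℝ)}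
    (hK : IsCompact K) (M : ℝ) :
    ∃ C, ∀ y ∈ K, ∀ v : Fin m → ℝ, euclNorm v ≤ M → ∑ i, (v i - divE (X i) y) ^ 2 ≤ C := by
  have hcont : Continuous (fun y => ∑ i, divE (X i) y ^ 2) :=
    continuous_finsetSum _ fun i _ => (continuous_divE (hX i)).pow 2
  obtain ⟨D, hD⟩ := (hK.image hcont).bddAbove
  refine ⟨2 * (M ^ 2 + D), fun y hy v hv => ?_⟩
  calc ∑ i, (v i - divE (X i) y) ^ 2
      ≤ ∑ i, 2 * (v i ^ 2 + divE (X i) y ^ 2) :=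
        Finset.sum_le_sum fun i _ => by linarith [sq_nonneg (v i + divE (X i) y)]
    _ = 2 * (∑ i, v i ^ 2 + ∑ i, divE (X i) y ^ 2) := by
        rw [← Finset.mul_sum, Finset.sum_add_distrib]
    _ ≤ 2 * (M ^ 2 + D) := by
        gcongr
        · exact sum_sq_le_sq_of_euclNorm_le hv
        · exact hD (mem_image_of_mem _ hy)

end EnergyEstimate

section ParametricIntegral

variable {Y : Type*} [TopologicalSpace Y] [MeasurableSpace Y] [OpensMeasurableSpace Y]
  {μ : Measure Y} [IsFiniteMeasureOnCompacts μ]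

lemma eq_zero_of_integral_sq_nonpos [μ.IsOpenPosMeasure] {f : Y → ℝ} (hf : Continuous f)
    (hfc : HasCompactSupport f) (hint : ∫ y, f y ^ 2 ∂μ ≤ 0) (y : Y) : f y = 0 := by
  by_contra hy
  exact hint.not_gt <| (hf.pow 2).integral_pos_of_hasCompactSupport_nonneg_nonzero
    (hasCompactSupport_sq hfc) (fun z => sq_nonneg (f z)) (pow_ne_zero 2 hy)

variable [T2Space Y] {K : Set Y}

lemma hasDerivAt_integral_of_compact_support {𝕜 E : Type*} [RCLike 𝕜] [NormedAddCommGroup E]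
    [NormedSpace ℝ E] [NormedSpace 𝕜 E] {U : Set 𝕜} (hU : IsOpen U) (hK : IsCompact K)
    {F F' : 𝕜 → Y → E} (hF : ∀ t ∈ U, Continuous (F t))
    (hF' : ContinuousOn (fun p : 𝕜 × Y => F' p.1 p.2) (U ×ˢ univ))
    (hsupp : ∀ t ∈ U, ∀ y ∉ K, F t y = 0)
    (hderiv : ∀ t ∈ U, ∀ y, HasDerivAt (fun τ => F τ y) (F' t y) t) {t : 𝕜} (ht : t ∈ U) :
    HasDerivAt (fun τ => ∫ y, F τ y ∂μ) (∫ y, F' t y ∂μ) t := by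
  have hsupp' : ∀ τ ∈ U, ∀ y ∉ K, F' τ y = 0 := fun τ hτ y hy =>
    (hderiv τ hτ y).unique <| (hasDerivAt_const τ 0).congr_of_eventuallyEq <|
      (hU.eventually_mem hτ).mono fun σ hσ => hsupp σ hσ y hy
  have hFint : ∀ τ ∈ U, Integrable (F τ) μ := fun τ hτ =>
    (hF τ hτ).integrable_of_hasCompactSupport (HasCompactSupport.intro hK (hsupp τ hτ))
  have hF'cont : Continuous (F' t) :=
    hF'.comp_continuous (Continuous.prodMk_right t) fun y => ⟨ht, mem_univ y⟩
  have hF'int : Integrable (F' t) μ :=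
    hF'cont.integrable_of_hasCompactSupport (HasCompactSupport.intro hK (hsupp' t ht))
  obtain ⟨ε, hε, hball⟩ := Metric.nhds_basis_closedBall.mem_iff.1 (hU.mem_nhds ht)
  obtain ⟨C, hC⟩ := ((isCompact_closedBall t ε).prod hK).exists_bound_of_continuousOn
    (hF'.mono (prod_mono hball (subset_univ K)))
  refine (hasDerivAt_integral_of_dominated_loc_of_deriv_le (bound := K.indicator fun _ => C)
    (Metric.closedBall_mem_nhds t hε)
    ((hU.eventually_mem ht).mono fun τ hτ => (hFint τ hτ).aestronglyMeasurable) (hFint t ht)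
    hF'int.aestronglyMeasurable (.of_forall fun y τ hτ => ?_)
    ((integrable_indicator_iff hK.measurableSet).2 (integrableOn_const hK.measure_ne_top))
    (.of_forall fun y τ hτ => hderiv τ (hball hτ) y)).2
  by_cases hy : y ∈ K
  · rw [indicator_of_mem hy]
    exact hC (τ, y) ⟨hτ, hy⟩
  · rw [indicator_of_notMem hy, hsupp' τ (hball hτ) y hy, norm_zero]

lemma hasDerivAt_integral_sq_of_compact_support {U : Set ℝ} (hU : IsOpen U) (hK : IsCompact K)
    {f f' : ℝ → Y → ℝ} (hf : ContinuousOn (fun p : ℝ × Y => f p.1 p.2) (U ×ˢ univ))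
    (hf' : ContinuousOn (fun p : ℝ × Y => f' p.1 p.2) (U ×ˢ univ))
    (hsupp : ∀ t ∈ U, ∀ y ∉ K, f t y = 0)
    (hderiv : ∀ t ∈ U, ∀ y, HasDerivAt (fun τ => f τ y) (f' t y) t) {t : ℝ} (ht : t ∈ U) :
    HasDerivAt (fun τ => ∫ y, f τ y ^ 2 ∂μ) (2 * ∫ y, f t y * f' t y ∂μ) t := by
  rw [← integral_const_mul]
  refine hasDerivAt_integral_of_compact_support hU hK
    (F' := fun τ y => 2 * (f τ y * f' τ y)) (fun τ hτ => ?_) ((hf.mul hf').const_mul 2)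
    (fun τ hτ y hy => ?_) (fun τ hτ y => ?_) ht
  · exact (hf.comp_continuous (Continuous.prodMk_right τ) fun y => ⟨hτ, mem_univ y⟩).pow 2
  · rw [hsupp τ hτ y hy, zero_pow two_ne_zero]
  · simpa [mul_assoc] using (hderiv τ hτ y).fun_pow 2

end ParametricIntegral

-- Unlike Mathlib's Grönwall inequalities, this one needs no derivative at the left endpoint.
lemma le_mul_exp_of_hasDerivAt_le_mul {f f' : ℝ → ℝ} {a b C : ℝ} (hf : ContinuousOn f (Icc a b))
    (hf' : ∀ t ∈ Ioo a b, HasDerivAt f (f' t) t) (hle : ∀ t ∈ Ioo a b, f' t ≤ C * f t) :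
    ∀ t ∈ Icc a b, f t ≤ f a * Real.exp (C * (t - a)) := by
  intro t ht
  have hexp (τ : ℝ) : HasDerivAt (fun σ => Real.exp (-C * (σ - a)))
      (Real.exp (-C * (τ - a)) * -C) τ := by
    simpa using (((hasDerivAt_id τ).sub_const a).const_mul (-C)).exp
  have hanti : AntitoneOn (fun τ => f τ * Real.exp (-C * (τ - a))) (Icc a b) := by
    refine antitoneOn_of_hasDerivWithinAt_nonpos (convex_Icc a b)
      (f' := fun τ => (f' τ - C * f τ) * Real.exp (-C * (τ - a)))
      (hf.mul (by fun_prop)) (fun τ hτ => ?_) (fun τ hτ => ?_) <;> rw [interior_Icc] at hτ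
    · exact (((hf' τ hτ).mul (hexp τ)).congr_deriv (by ring)).hasDerivWithinAt
    · exact mul_nonpos_of_nonpos_of_nonneg (sub_nonpos.2 (hle τ hτ)) (Real.exp_pos _).le
  have hmono := hanti (left_mem_Icc.2 (ht.1.trans ht.2)) ht ht.1
  simp only [sub_self, mul_zero, Real.exp_zero, mul_one, neg_mul, Real.exp_neg] at hmono
  exact (mul_inv_le_iff₀ (Real.exp_pos _)).1 hmono

theorem fokker_planck_uniqueness_general {d m : ℕ} {X : Fin m → (Fin d → ℝ) → (Fin d → ℝ)}
    (hX : ∀ i, ContDiff ℝ 1 (X i)) {s T : ℝ} {K : Set (Fin d → ℝ)} (hK : IsCompact K)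
    {β : ℝ → (Fin d → ℝ) → Fin m → ℝ} (hβC1 : ∀ t ∈ Ioo s T, ContDiff ℝ 1 (β t))
    (hβbdd : ∃ M : ℝ, ∀ t ∈ Ioo s T, ∀ y ∈ K, euclNorm (β t y) ≤ M)
    {ρ : ℝ → (Fin d → ℝ) → ℝ}
    (hρcont : ContinuousOn (fun p : ℝ × (Fin d → ℝ) => ρ p.1 p.2) (Icc s T ×ˢ univ))
    (hρC2 : ∀ t ∈ Ioo s T, ContDiff ℝ 2 (ρ t))
    (hρtC : ContinuousOn (fun p : ℝ × (Fin d → ℝ) => deriv (fun τ => ρ τ p.2) p.1)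
      (Ioo s T ×ˢ univ))
    (hsupp : ∀ t ∈ Icc s T, ∀ y ∉ K, ρ t y = 0)
    (hpde : ∀ t ∈ Ioo s T, ∀ y, HasDerivAt (fun τ => ρ τ y) (fokkerPlanckOp X (β t) (ρ t) y) t)
    (hinit : ∀ y, ρ s y = 0) :
    ∀ t ∈ Icc s T, ∀ y, ρ t y = 0 := by
  obtain ⟨M, hM⟩ := hβbdd
  obtain ⟨C, hC⟩ := exists_sum_sub_divE_sq_le hX hK M
  have hcompact : ∀ t ∈ Icc s T, HasCompactSupport (ρ t) := fun t ht =>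
    HasCompactSupport.intro hK (hsupp t ht)
  have hEcont : ContinuousOn (fun t => ∫ y, ρ t y ^ 2) (Icc s T) :=
    continuousOn_integral_of_compact_support hK (hρcont.pow 2) fun t y ht hy => by
      rw [hsupp t ht y hy, zero_pow two_ne_zero]
  have hE' : ∀ t ∈ Ioo s T, HasDerivAt (fun τ => ∫ y, ρ τ y ^ 2)
      (2 * ∫ y, ρ t y * fokkerPlanckOp X (β t) (ρ t) y) t := fun t ht =>
    hasDerivAt_integral_sq_of_compact_support isOpen_Ioo hK
      (f' := fun τ => fokkerPlanckOp X (β τ) (ρ τ))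
      (hρcont.mono (prod_mono_left Ioo_subset_Icc_self))
      (hρtC.congr fun p hp => (hpde p.1 hp.1 p.2).deriv.symm)
      (fun τ hτ => hsupp τ (Ioo_subset_Icc_self hτ)) hpde ht
  have hE'le : ∀ t ∈ Ioo s T, 2 * ∫ y, ρ t y * fokkerPlanckOp X (β t) (ρ t) y ≤
      C / 2 * ∫ y, ρ t y ^ 2 := fun t ht => by
    have htIcc := Ioo_subset_Icc_self ht
    have hρK : Function.support (ρ t) ⊆ K := Function.support_subset_iff'.2 (hsupp t htIcc)
    linarith [integral_mul_fokkerPlanckOp_le hX (hβC1 t ht) (hρC2 t ht) (hcompact t htIcc)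
      fun y hy => hC y (hρK hy) _ (hM t ht y (hρK hy))]
  intro t ht
  have hEt : ∫ y, ρ t y ^ 2 ≤ 0 := by
    simpa [hinit] using le_mul_exp_of_hasDerivAt_le_mul hEcont hE' hE'le t ht
  exact eq_zero_of_integral_sq_nonpos
    (hρcont.comp_continuous (Continuous.prodMk_right t) fun y => ⟨ht, mem_univ y⟩)
    (hcompact t ht) hEt

/-- Uniqueness (vanishing) for compactly supported classical solutions of the subelliptic
Fokker-Planck equation with zero initial datum. -/
theorem fokker_planck_uniqueness
    {d m : ℕ} (hd : 1 ≤ d) (hm : 1 ≤ m)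
    (X : Fin m → (Fin d → ℝ) → (Fin d → ℝ))
    (hXsmooth : ∀ i, ContDiff ℝ (⊤ : ℕ∞) (X i))
    (hXdiv : ∀ i x, divE (X i) x = 0)
    (s T : ℝ) (hsT : s < T)
    (β : ℝ → (Fin d → ℝ) → Fin m → ℝ)
    (hβcont : ContinuousOn (fun p : ℝ × (Fin d → ℝ) => β p.1 p.2) (Icc s T ×ˢ univ))
    (hβC1 : ∀ t ∈ Icc s T, ContDiff ℝ 1 (fun y => β t y))
    (hβbdd : ∃ M : ℝ, ∀ t ∈ Icc s T, ∀ y, euclNorm (β t y) ≤ M)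
    (ρ : ℝ → (Fin d → ℝ) → ℝ)
    (hρcont : ContinuousOn (fun p : ℝ × (Fin d → ℝ) => ρ p.1 p.2) (Icc s T ×ˢ univ))
    (hρC2 : ∀ t ∈ Ioc s T, ContDiff ℝ 2 (ρ t))
    (hρtC : ContinuousOn (fun p : ℝ × (Fin d → ℝ) => deriv (fun τ => ρ τ p.2) p.1)
      (Ioc s T ×ˢ univ))
    (K : Set (Fin d → ℝ)) (hK : IsCompact K)
    (hsupp : ∀ t ∈ Icc s T, ∀ y ∉ K, ρ t y = 0)
    (hpde : ∀ t ∈ Ioc s T, ∀ y, HasDerivAt (fun τ => ρ τ y)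
      (deltaG X (ρ t) y + divG X (fun z i => β t z i * ρ t z) y) t)
    (hinit : ∀ y, ρ s y = 0) :
    ∀ t ∈ Icc s T, ∀ y, ρ t y = 0 :=
  fokker_planck_uniqueness_general (fun i => (hXsmooth i).of_le (by exact_mod_cast le_top)) hK
    (fun t ht => hβC1 t (Ioo_subset_Icc_self ht))
    (hβbdd.imp fun M hM t ht y _ => hM t (Ioo_subset_Icc_self ht) y) hρcont
    (fun t ht => hρC2 t (Ioo_subset_Ioc_self ht))
    (hρtC.mono (prod_mono_left Ioo_subset_Ioc_self)) hsupp
    (fun t ht => hpde t (Ioo_subset_Ioc_self ht)) hinit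
end

section
/- Let s < T, let X₁,…,X_m : ℝ^d → ℝ^d be C^∞ vector fields with vanishing Euclidean divergence, and let β : [s,T]×ℝ^d → ℝ^m be continuous, continuously differentiable in the space variable, with sup_{t∈[s,T]} sup_{y∈ℝ^d} |div_G β(t,·)(y)| < ∞, where div_G β(t,·) = Σᵢ Xᵢβᵢ(t,·). Suppose ρ : [s,T]×ℝ^d → ℝ is continuous, continuously differentiable in t and twice continuously differentiable in y on (s,T]×ℝ^d, there is a compact set K ⊂ ℝ^d such that ρ(t,·) is supported in K for every t ∈ [s,T], ρ solves ∂_tρ(t,y) = Δ_Gρ(t,·)(y) + div_G(β(t,·)ρ(t,·))(y) on (s,T]×ℝ^d, and ρ(s,·) ≥ 0. Then ρ(t,y) ≥ 0 for all (t,y) ∈ [s,T]×ℝ^d. -/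
/-!
The proof is the weak minimum principle. If `ρ` were negative somewhere, then
`exp (-(C + 1) t) * ρ t y`, with `div_G β ≤ C`, would attain a negative minimum over the compact
set `[s, T] × K`, at a time `t > s` and at a point which is a global minimum of `ρ t` since
`ρ t ≥ 0` off `K`. There the gradient of `ρ t` vanishes, so `Δ_G ρ` reduces to a sum of Hessian
terms, which is nonnegative, and the drift reduces to `ρ div_G β ≥ C ρ`. Hence
`∂ₜρ ≥ C ρ > (C + 1) ρ` there: the rescaled function is strictly increasing in time at its
minimum, which is impossible.
-/

open MeasureTheory Set

section Extrema

variable {E : Type*} [NormedAddCommGroup E] [NormedSpace ℝ E]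

lemma deriv_deriv_nonneg_of_isLocalMin {g : ℝ → ℝ} {a : ℝ} (hg : ContinuousAt g a)
    (hmin : IsLocalMin g a) : 0 ≤ deriv (deriv g) a := by
  by_contra! hneg
  -- By the second derivative test `a` is also a local maximum, so `g` is locally constant.
  have hmax : IsLocalMax g a := isLocalMax_of_deriv_deriv_neg hneg hmin.deriv_eq_zero hg
  have hconst : g =ᶠ[nhds a] fun _ => g a := by
    filter_upwards [hmin, hmax] with b hb hb' using le_antisymm hb' hb
  have hzero : deriv (deriv g) a = 0 := by simp [hconst.deriv.deriv_eq]
  exact hneg.ne hzero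

lemma deriv_deriv_comp_add_smul {f : E → ℝ} {x : E} (hf : ContDiffAt ℝ 2 f x) (v : E) :
    deriv (deriv fun τ : ℝ => f (x + τ • v)) 0 = fderiv ℝ (fderiv ℝ f) x v v := by
  have hline (τ : ℝ) : HasDerivAt (fun τ : ℝ => x + τ • v) v τ := by
    simpa using ((hasDerivAt_id τ).smul_const v).const_add x
  have hline_tendsto : Filter.Tendsto (fun τ : ℝ => x + τ • v) (nhds 0) (nhds x) :=
    Continuous.tendsto' (by fun_prop) 0 x (by simp)
  have hfirst : (deriv fun τ : ℝ => f (x + τ • v)) =ᶠ[nhds 0]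
      fun τ => fderiv ℝ f (x + τ • v) v := by
    filter_upwards [hline_tendsto.eventually (hf.eventually (by simp))] with τ hτ
    exact ((hτ.differentiableAt two_ne_zero).hasFDerivAt.comp_hasDerivAt τ (hline τ)).deriv
  have hf' : HasFDerivAt (fderiv ℝ f) (fderiv ℝ (fderiv ℝ f) x) (x + (0 : ℝ) • v) := by
    simpa using ((hf.fderiv_right (m := 1) (by norm_num)).differentiableAt one_ne_zero).hasFDerivAt
  have hsecond : HasDerivAt (fun τ : ℝ => fderiv ℝ f (x + τ • v)) (fderiv ℝ (fderiv ℝ f) x v) 0 :=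
    hf'.comp_hasDerivAt (0 : ℝ) (hline 0)
  rw [hfirst.deriv_eq, (hsecond.clm_apply (hasDerivAt_const (0 : ℝ) v)).deriv]
  simp

lemma fderiv_fderiv_apply_self_nonneg_of_isLocalMin {f : E → ℝ} {x : E} (hf : ContDiffAt ℝ 2 f x)
    (hmin : IsLocalMin f x) (v : E) : 0 ≤ fderiv ℝ (fderiv ℝ f) x v v := by
  have hline : ContinuousAt (fun τ : ℝ => x + τ • v) 0 := by fun_prop
  have hf' : ContinuousAt (fun τ : ℝ => f (x + τ • v)) 0 :=
    hf.continuousAt.comp_of_eq hline (by simp)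
  have hmin' : IsLocalMin (fun τ : ℝ => f (x + τ • v)) 0 :=
    IsMinFilter.comp_tendsto (g := fun τ : ℝ => x + τ • v) (by simpa [IsLocalMin] using hmin)
      (by simpa using hline.tendsto)
  rw [← deriv_deriv_comp_add_smul hf v]
  exact deriv_deriv_nonneg_of_isLocalMin hf' hmin'

lemma nonpos_of_hasDerivWithinAt_of_isLocalMinOn_Icc {g : ℝ → ℝ} {g' a b : ℝ} (hab : a < b)
    (hg : HasDerivWithinAt g g' (Icc a b) b) (hmin : IsLocalMinOn g (Icc a b) b) : g' ≤ 0 := by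
  have hcone : a - b ∈ posTangentConeAt (Icc a b) b :=
    sub_mem_posTangentConeAt_of_segment_subset (by rw [segment_symm, segment_eq_Icc hab.le])
  have hmul : 0 ≤ (a - b) * g' := by
    simpa using hmin.hasFDerivWithinAt_nonneg hg.hasFDerivWithinAt hcone
  exact nonpos_of_mul_nonneg_right hmul (sub_neg.2 hab)

end Extrema

section MinimumPrinciple

variable {E : Type*} [TopologicalSpace E] {K : Set E} {s T : ℝ} {u u' : ℝ → E → ℝ}

lemma nonneg_of_deriv_pos_of_neg_min (hK : IsCompact K)
    (hu : ContinuousOn (fun p : ℝ × E => u p.1 p.2) (Icc s T ×ˢ K))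
    (hu' : ∀ t ∈ Ioc s T, ∀ y, HasDerivWithinAt (fun τ => u τ y) (u' t y) (Icc s T) t)
    (hoff : ∀ t ∈ Icc s T, ∀ y ∉ K, 0 ≤ u t y) (hinit : ∀ y, 0 ≤ u s y)
    (hpos : ∀ t ∈ Ioc s T, ∀ y, u t y < 0 → (∀ z, u t y ≤ u t z) → 0 < u' t y) :
    ∀ t ∈ Icc s T, ∀ y, 0 ≤ u t y := by
  intro t₀ ht₀ y₀
  by_contra! hneg₀
  have hy₀ : y₀ ∈ K := by_contra fun hy => hneg₀.not_ge (hoff t₀ ht₀ y₀ hy)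
  obtain ⟨⟨t, y⟩, ⟨ht, hy⟩, hmin⟩ :=
    (isCompact_Icc.prod hK).exists_isMinOn ⟨(t₀, y₀), ht₀, hy₀⟩ hu
  have hle : ∀ τ ∈ Icc s T, ∀ z ∈ K, u t y ≤ u τ z := fun τ hτ z hz => hmin (mk_mem_prod hτ hz)
  have hneg : u t y < 0 := (hle t₀ ht₀ y₀ hy₀).trans_lt hneg₀
  have hst : s < t := ht.1.lt_of_ne fun (h : s = t) => hneg.not_ge (h ▸ hinit y)
  have hspace : ∀ z, u t y ≤ u t z := fun z => by
    by_cases hz : z ∈ K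
    · exact hle t ht z hz
    · exact hneg.le.trans (hoff t ht z hz)
  have hsub : Icc s t ⊆ Icc s T := Icc_subset_Icc_right ht.2
  have htime : IsMinOn (fun τ => u τ y) (Icc s t) t := fun τ hτ => hle τ (hsub hτ) y hy
  have hnonpos : u' t y ≤ 0 := nonpos_of_hasDerivWithinAt_of_isLocalMinOn_Icc hst
    ((hu' t ⟨hst, ht.2⟩ y).mono hsub) htime.localize
  exact (hpos t ⟨hst, ht.2⟩ y hneg hspace).not_ge hnonpos

lemma nonneg_of_mul_le_deriv_of_neg_min {C : ℝ} (hK : IsCompact K)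
    (hu : ContinuousOn (fun p : ℝ × E => u p.1 p.2) (Icc s T ×ˢ K))
    (hu' : ∀ t ∈ Ioc s T, ∀ y, HasDerivWithinAt (fun τ => u τ y) (u' t y) (Icc s T) t)
    (hoff : ∀ t ∈ Icc s T, ∀ y ∉ K, 0 ≤ u t y) (hinit : ∀ y, 0 ≤ u s y)
    (hle : ∀ t ∈ Ioc s T, ∀ y, u t y < 0 → (∀ z, u t y ≤ u t z) → C * u t y ≤ u' t y) :
    ∀ t ∈ Icc s T, ∀ y, 0 ≤ u t y := by
  let w : ℝ → ℝ := fun t => Real.exp (-(C + 1) * t)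
  have hw (t : ℝ) : 0 < w t := Real.exp_pos _
  have hw' (t : ℝ) : HasDerivAt w (w t * -(C + 1)) t := by
    simpa [w] using ((hasDerivAt_id t).const_mul (-(C + 1))).exp
  suffices hwu : ∀ t ∈ Icc s T, ∀ y, 0 ≤ w t * u t y from
    fun t ht y => nonneg_of_mul_nonneg_right (hwu t ht y) (hw t)
  refine nonneg_of_deriv_pos_of_neg_min (u := fun t y => w t * u t y)
    (u' := fun t y => w t * -(C + 1) * u t y + w t * u' t y) hK (ContinuousOn.mul (by fun_prop) hu)
    (fun t ht y => (hw' t).hasDerivWithinAt.mul (hu' t ht y))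
    (fun t ht y hy => mul_nonneg (hw t).le (hoff t ht y hy))
    (fun y => mul_nonneg (hw s).le (hinit y)) fun t ht y hneg hmin => ?_
  have hneg' : u t y < 0 := (pos_iff_neg_of_mul_neg hneg).1 (hw t)
  have hle' : C * u t y ≤ u' t y :=
    hle t ht y hneg' fun z => le_of_mul_le_mul_left (hmin z) (hw t)
  calc 0 < w t * (u' t y - (C + 1) * u t y) := mul_pos (hw t) (by linarith)
    _ = w t * -(C + 1) * u t y + w t * u' t y := by ring

end MinimumPrinciple

section HorizontalOperators

variable {d m : ℕ} {X : Fin m → (Fin d → ℝ) → (Fin d → ℝ)} {f : (Fin d → ℝ) → ℝ} {x : Fin d → ℝ}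

lemma dirDeriv_eq_zero_of_isLocalMin (hmin : IsLocalMin f x) (V : (Fin d → ℝ) → (Fin d → ℝ)) :
    dirDeriv V f x = 0 := by
  simp [dirDeriv, hmin.fderiv_eq_zero]

lemma dirDeriv_dirDeriv {V : (Fin d → ℝ) → (Fin d → ℝ)} (hV : DifferentiableAt ℝ V x)
    (hf : DifferentiableAt ℝ (fderiv ℝ f) x) :
    dirDeriv V (dirDeriv V f) x =
      fderiv ℝ (fderiv ℝ f) x (V x) (V x) + fderiv ℝ f x (fderiv ℝ V x (V x)) := by
  unfold dirDeriv
  rw [fderiv_clm_apply hf hV]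
  simp [add_comm]

lemma deltaG_nonneg_of_isLocalMin (hX : ∀ i, DifferentiableAt ℝ (X i) x)
    (hf : ContDiffAt ℝ 2 f x) (hmin : IsLocalMin f x) : 0 ≤ deltaG X f x := by
  have hf' : DifferentiableAt ℝ (fderiv ℝ f) x :=
    (hf.fderiv_right (m := 1) (by norm_num)).differentiableAt one_ne_zero
  refine Finset.sum_nonneg fun i _ => ?_
  rw [dirDeriv_dirDeriv (hX i) hf', hmin.fderiv_eq_zero]
  simpa using fderiv_fderiv_apply_self_nonneg_of_isLocalMin hf hmin (X i x)

lemma divG_mul {b : (Fin d → ℝ) → Fin m → ℝ} (hb : DifferentiableAt ℝ b x)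
    (hf : DifferentiableAt ℝ f x) :
    divG X (fun z i => b z i * f z) x =
      f x * divG X b x + ∑ i, b x i * dirDeriv (X i) f x := by
  simp only [divG, dirDeriv, Finset.mul_sum, ← Finset.sum_add_distrib]
  refine Finset.sum_congr rfl fun i _ => ?_
  rw [fderiv_fun_mul (differentiableAt_pi.1 hb i) hf]
  simp [add_comm]

end HorizontalOperators

theorem fokker_planck_nonnegativity_general
    {d m : ℕ} {X : Fin m → (Fin d → ℝ) → (Fin d → ℝ)} (hX : ∀ i, Differentiable ℝ (X i))
    {s T C : ℝ} {β : ℝ → (Fin d → ℝ) → Fin m → ℝ}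
    (hβ : ∀ t ∈ Ioc s T, Differentiable ℝ (β t))
    (hβdiv : ∀ t ∈ Ioc s T, ∀ y, divG X (β t) y ≤ C)
    {ρ : ℝ → (Fin d → ℝ) → ℝ} {K : Set (Fin d → ℝ)}
    (hρcont : ContinuousOn (fun p : ℝ × (Fin d → ℝ) => ρ p.1 p.2) (Icc s T ×ˢ K))
    (hρC2 : ∀ t ∈ Ioc s T, ContDiff ℝ 2 (ρ t))
    (hK : IsCompact K) (hoff : ∀ t ∈ Icc s T, ∀ y ∉ K, 0 ≤ ρ t y)
    (hpde : ∀ t ∈ Ioc s T, ∀ y, HasDerivWithinAt (fun τ => ρ τ y)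
      (deltaG X (ρ t) y + divG X (fun z i => β t z i * ρ t z) y) (Icc s T) t)
    (hinit : ∀ y, 0 ≤ ρ s y) :
    ∀ t ∈ Icc s T, ∀ y, 0 ≤ ρ t y := by
  refine nonneg_of_mul_le_deriv_of_neg_min (C := C) hK hρcont hpde hoff hinit
    fun t ht y hneg hmin => ?_
  have hlocmin : IsLocalMin (ρ t) y := Filter.Eventually.of_forall hmin
  have hlap : 0 ≤ deltaG X (ρ t) y :=
    deltaG_nonneg_of_isLocalMin (fun i => hX i y) (hρC2 t ht).contDiffAt hlocmin
  have hdrift : divG X (fun z i => β t z i * ρ t z) y = ρ t y * divG X (β t) y := by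
    simp [divG_mul (hβ t ht y) ((hρC2 t ht).differentiable two_ne_zero y),
      dirDeriv_eq_zero_of_isLocalMin hlocmin]
  calc C * ρ t y ≤ divG X (β t) y * ρ t y := mul_le_mul_of_nonpos_right (hβdiv t ht y) hneg.le
    _ ≤ deltaG X (ρ t) y + divG X (fun z i => β t z i * ρ t z) y := by
      rw [hdrift, mul_comm]
      exact le_add_of_nonneg_left hlap

/-- Preservation of nonnegativity for compactly supported classical solutions of the
subelliptic Fokker-Planck equation (with bounded horizontal divergence of the drift). -/
theorem fokker_planck_nonnegativity
    {d m : ℕ} (hd : 1 ≤ d) (hm : 1 ≤ m)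
    (X : Fin m → (Fin d → ℝ) → (Fin d → ℝ))
    (hXsmooth : ∀ i, ContDiff ℝ (⊤ : ℕ∞) (X i))
    (hXdiv : ∀ i x, divE (X i) x = 0)
    (s T : ℝ) (hsT : s < T)
    (β : ℝ → (Fin d → ℝ) → Fin m → ℝ)
    (hβcont : ContinuousOn (fun p : ℝ × (Fin d → ℝ) => β p.1 p.2) (Icc s T ×ˢ univ))
    (hβC1 : ∀ t ∈ Icc s T, ContDiff ℝ 1 (fun y => β t y))
    (hβdivbdd : ∃ C : ℝ, ∀ t ∈ Icc s T, ∀ y, |divG X (fun z => β t z) y| ≤ C)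
    (ρ : ℝ → (Fin d → ℝ) → ℝ)
    (hρcont : ContinuousOn (fun p : ℝ × (Fin d → ℝ) => ρ p.1 p.2) (Icc s T ×ˢ univ))
    (hρC2 : ∀ t ∈ Ioc s T, ContDiff ℝ 2 (ρ t))
    (hρtC : ContinuousOn (fun p : ℝ × (Fin d → ℝ) => deriv (fun τ => ρ τ p.2) p.1)
      (Ioc s T ×ˢ univ))
    (K : Set (Fin d → ℝ)) (hK : IsCompact K)
    (hsupp : ∀ t ∈ Icc s T, ∀ y ∉ K, ρ t y = 0)
    (hpde : ∀ t ∈ Ioc s T, ∀ y, HasDerivAt (fun τ => ρ τ y)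
      (deltaG X (ρ t) y + divG X (fun z i => β t z i * ρ t z) y) t)
    (hinit : ∀ y, 0 ≤ ρ s y) :
    ∀ t ∈ Icc s T, ∀ y, 0 ≤ ρ t y := by
  obtain ⟨C, hC⟩ := hβdivbdd
  exact fokker_planck_nonnegativity_general (fun i => (hXsmooth i).differentiable (by simp))
    (fun t ht => (hβC1 t (Ioc_subset_Icc_self ht)).differentiable one_ne_zero)
    (fun t ht y => (abs_le.1 (hC t (Ioc_subset_Icc_self ht) y)).2)
    (hρcont.mono (prod_mono_right (subset_univ K))) hρC2 hK (fun t ht y hy => (hsupp t ht y hy).ge)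
    (fun t ht y => (hpde t ht y).hasDerivWithinAt) hinit
end
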